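/- For every m ≥ 1, PA⁻ + IΣ₁ proves that fairFRT^1(Σm) implies GPHP(Σm). -/

import Mathlib

/- Shared development: first-order arithmetic in the language {0,1,+,·,<},
   the arithmetic hierarchy, fragments of arithmetic, and coded finite
   combinatorics inside models. -/

open FirstOrder Language

namespace ArithFC

/-- Function symbols of the language of arithmetic: 0, 1, +, ·. -/
inductive Func : ℕ → Type
  | zero : Func 0
  | one : Func 0
  | add : Func 2
  | mul : Func 2

/-- Relation symbols of the language of arithmetic: <. -/
inductive Rel : ℕ → Type
  | lt : Rel 2

/-- The first-order language {0, 1, +, ·, <}. -/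
def lang : Language :=
  { Functions := Func, Relations := Rel }

section Instances

variable (M : Type) [lang.Structure M]

instance : Zero M := ⟨Structure.funMap (L := lang) Func.zero ![]⟩
instance : One M := ⟨Structure.funMap (L := lang) Func.one ![]⟩
instance : Add M := ⟨fun x y => Structure.funMap (L := lang) Func.add ![x, y]⟩
instance : Mul M := ⟨fun x y => Structure.funMap (L := lang) Func.mul ![x, y]⟩
instance : LT M := ⟨fun x y => Structure.RelMap (L := lang) Rel.lt ![x, y]⟩
instance : LE M := ⟨fun x y => x < y ∨ x = y⟩

end Instances

/-- The numeral `n` in a model. -/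
def numM (M : Type) [lang.Structure M] : ℕ → M
  | 0 => 0
  | n + 1 => numM M n + 1

/-- `b` is nonstandard (greater than every numeral). -/
def Nonstd {M : Type} [lang.Structure M] (b : M) : Prop := ∀ n : ℕ, numM M n < b

/-- The atomic formula `t < u`. -/
def ltFm {α : Type} {n : ℕ} (t u : lang.Term (α ⊕ Fin n)) : lang.BoundedFormula α n :=
  BoundedFormula.rel (Rel.lt : lang.Relations 2) ![t, u]

/-- Δ₀ formulas: built from atomic formulas by boolean connectives and
bounded universal quantification (this generates, up to logical equivalence,
the usual class of bounded formulas). -/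
inductive IsDelta0 {α : Type} : ∀ n : ℕ, lang.BoundedFormula α n → Prop
  | falsum (n : ℕ) : IsDelta0 n BoundedFormula.falsum
  | equal (n : ℕ) (t u : lang.Term (α ⊕ Fin n)) : IsDelta0 n (BoundedFormula.equal t u)
  | rel (n l : ℕ) (R : lang.Relations l) (ts : Fin l → lang.Term (α ⊕ Fin n)) :
      IsDelta0 n (BoundedFormula.rel R ts)
  | imp (n : ℕ) {φ ψ : lang.BoundedFormula α n} :
      IsDelta0 n φ → IsDelta0 n ψ → IsDelta0 n (φ.imp ψ)
  | bdAll (n : ℕ) (t : lang.Term (α ⊕ Fin n)) {φ : lang.BoundedFormula α (n + 1)} :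
      IsDelta0 (n + 1) φ →
      IsDelta0 n
        (BoundedFormula.all ((ltFm (Term.var (Sum.inr (Fin.last n))) (t.liftAt 1 n)).imp φ))

mutual
  /-- Σ_m formulas. -/
  inductive SigmaFm {α : Type} : ℕ → ∀ n : ℕ, lang.BoundedFormula α n → Prop
    | delta0 (m n : ℕ) {φ : lang.BoundedFormula α n} : IsDelta0 n φ → SigmaFm m n φ
    | ofPi (m n : ℕ) {φ : lang.BoundedFormula α n} : PiFm m n φ → SigmaFm (m + 1) n φ
    | ex (m n : ℕ) {φ : lang.BoundedFormula α (n + 1)} :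
        SigmaFm (m + 1) (n + 1) φ → SigmaFm (m + 1) n φ.ex
  /-- Π_m formulas. -/
  inductive PiFm {α : Type} : ℕ → ∀ n : ℕ, lang.BoundedFormula α n → Prop
    | delta0 (m n : ℕ) {φ : lang.BoundedFormula α n} : IsDelta0 n φ → PiFm m n φ
    | ofSigma (m n : ℕ) {φ : lang.BoundedFormula α n} : SigmaFm m n φ → PiFm (m + 1) n φ
    | all (m n : ℕ) {φ : lang.BoundedFormula α (n + 1)} :
        PiFm (m + 1) (n + 1) φ → PiFm (m + 1) n φ.all
end

/-- A `k`-ary relation on `M` is Σ_m-definable (with parameters from `M`). -/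
def IsSigmaDef (m : ℕ) (M : Type) [lang.Structure M] {k : ℕ} (R : (Fin k → M) → Prop) : Prop :=
  ∃ (p : ℕ) (φ : lang.BoundedFormula (Fin k ⊕ Fin p) 0) (w : Fin p → M),
    SigmaFm m 0 φ ∧ ∀ v : Fin k → M, R v ↔ φ.Realize (Sum.elim v w) finZeroElim

/-- A subset of `M` is Σ_m-definable with parameters. -/
def SigmaDef1 (m : ℕ) (M : Type) [lang.Structure M] (A : Set M) : Prop :=
  IsSigmaDef m M (k := 1) fun v => v 0 ∈ A

/-- A binary relation on `M` is Σ_m-definable with parameters. -/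
def SigmaDef2 (m : ℕ) (M : Type) [lang.Structure M] (R : M → M → Prop) : Prop :=
  IsSigmaDef m M (k := 2) fun v => R (v 0) (v 1)

/-- A ternary relation on `M` is Σ_m-definable with parameters. -/
def SigmaDef3 (m : ℕ) (M : Type) [lang.Structure M] (R : M → M → M → Prop) : Prop :=
  IsSigmaDef m M (k := 3) fun v => R (v 0) (v 1) (v 2)

/-- `M` is a model of PA⁻ (the nonnegative part of a discretely ordered
commutative semiring). -/
structure PAm (M : Type) [lang.Structure M] : Prop where
  add_assoc : ∀ x y z : M, x + y + z = x + (y + z)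
  add_comm : ∀ x y : M, x + y = y + x
  mul_assoc : ∀ x y z : M, x * y * z = x * (y * z)
  mul_comm : ∀ x y : M, x * y = y * x
  ldistrib : ∀ x y z : M, x * (y + z) = x * y + x * z
  add_zero : ∀ x : M, x + 0 = x
  mul_zero : ∀ x : M, x * 0 = 0
  mul_one : ∀ x : M, x * 1 = x
  lt_trans : ∀ x y z : M, x < y → y < z → x < z
  lt_irrefl : ∀ x : M, ¬x < x
  lt_total : ∀ x y : M, x < y ∨ x = y ∨ y < x
  add_lt_add : ∀ x y z : M, x < y → x + z < y + z
  mul_lt_mul : ∀ x y z : M, x < y → 0 < z → x * z < y * z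
  sub_exists : ∀ x y : M, x < y → ∃ z, x + z = y
  zero_lt_one : (0 : M) < 1
  discrete : ∀ x : M, 0 < x → (1 : M) ≤ x
  zero_le : ∀ x : M, (0 : M) ≤ x

/-- `M` satisfies the Σ_m-induction scheme (with parameters). -/
def ISig (m : ℕ) (M : Type) [lang.Structure M] : Prop :=
  ∀ A : Set M, SigmaDef1 m M A → (0 : M) ∈ A → (∀ x, x ∈ A → x + 1 ∈ A) → ∀ x, x ∈ A

/-- `M` satisfies the Σ_m-collection (bounding) scheme (with parameters). -/
def BSig (m : ℕ) (M : Type) [lang.Structure M] : Prop :=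
  ∀ R : M → M → Prop, SigmaDef2 m M R → ∀ a : M,
    (∀ x, x < a → ∃ y, R x y) → ∃ b, ∀ x, x < a → ∃ y, y < b ∧ R x y

section Coding

variable {M : Type} [lang.Structure M]

/-- `z` is the Cantor pair `⟨x, y⟩`: `2z = (x+y)(x+y+1) + 2y`. -/
def IsPairC (z x y : M) : Prop := z + z = (x + y) * (x + y + 1) + (y + y)

/-- Gödel's β-function: `x = a mod ((i+1)·b + 1)`. -/
def BetaC (a b i x : M) : Prop :=
  x < (i + 1) * b + 1 ∧ ∃ q, a = q * ((i + 1) * b + 1) + x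

/-- The sequence coded by `s` (via a Cantor pair of β-function data) has value `x`
at place `i`. -/
def SeqAt (s i x : M) : Prop := ∃ a b, IsPairC s a b ∧ BetaC a b i x

/-- `c` codes the M-finite set `X` of cardinality `card`: `c = ⟨card, s⟩` where `s`
codes the strictly increasing enumeration of `X` of length `card`. -/
def CodesFinset (c : M) (X : Set M) (card : M) : Prop :=
  ∃ s, IsPairC c card s ∧
    (∀ i, i < card → ∃ x, x ∈ X ∧ SeqAt s i x) ∧
    (∀ i j x y, i < j → j < card → SeqAt s i x → SeqAt s j y → x < y) ∧
    (∀ x, x ∈ X ↔ ∃ i, i < card ∧ SeqAt s i x)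

/-- `X` is an M-finite (coded) set. -/
def MFinite (X : Set M) : Prop := ∃ c card : M, CodesFinset c X card

/-- `d` codes an `e`-element subset `D` of `[0, y)`, i.e. an element of `[y]^e`. -/
def CodesTupleIn (d e y : M) (D : Set M) : Prop :=
  CodesFinset d D e ∧ ∀ z ∈ D, z < y

/-- `f` codes a (finite) function defined on all of `[0, a)`. -/
def CodesFunOn (f a : M) : Prop :=
  ∀ x, x < a → (∃ y, SeqAt f x y) ∧ ∀ y y', SeqAt f x y → SeqAt f x y' → y = y'

/-- `X` is an M-coded subset of `[0, a)`. -/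
def MCodedSubset (a : M) (X : Set M) : Prop :=
  MFinite X ∧ ∀ x ∈ X, x < a

end Coding

/-- An `M`-ultrafilter on `a`: an ultrafilter of the Boolean algebra of
M-finite subsets of `[0, a)`. -/
structure MUltra (M : Type) [lang.Structure M] (a : M) where
  sets : Set (Set M)
  mem_coded : ∀ X ∈ sets, MCodedSubset a X
  univ_mem : {x : M | x < a} ∈ sets
  superset_mem : ∀ X Y : Set M, X ∈ sets → MCodedSubset a Y → X ⊆ Y → Y ∈ sets
  inter_mem : ∀ X Y : Set M, X ∈ sets → Y ∈ sets → X ∩ Y ∈ sets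
  empty_not_mem : (∅ : Set M) ∉ sets
  ultra : ∀ X : Set M, MCodedSubset a X → X ∈ sets ∨ {x : M | x < a ∧ x ∉ X} ∈ sets

section Principles

variable (M : Type) [lang.Structure M]

/-- `F` is (the graph of) a Σ_m-definable injection from `[0, y)` into `[0, x)`. -/
def SigmaInjRel (m : ℕ) (F : M → M → Prop) (y x : M) : Prop :=
  SigmaDef2 m M F ∧
    (∀ u, u < y → ∃ v, v < x ∧ F u v) ∧
    (∀ u v v', u < y → F u v → F u v' → v = v') ∧
    (∀ u u' v, u < y → u' < y → F u v → F u' v → u = u')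

/-- There exists a Σ_m-definable injection from `[0, y)` into `[0, x)`. -/
def ExSigmaInj (m : ℕ) (y x : M) : Prop := ∃ F : M → M → Prop, SigmaInjRel M m F y x

/-- There exists a Σ_m-definable injection from all of `M` into `[0, a)`. -/
def SigmaInjWhole (m : ℕ) (a : M) : Prop :=
  ∃ F : M → M → Prop, SigmaDef2 m M F ∧
    (∀ u, ∃ v, v < a ∧ F u v) ∧
    (∀ u v v', F u v → F u v' → v = v') ∧
    (∀ u u' v, F u v → F u' v → u = u')

/-- CARD(Σ_m): no Σ_m-definable multivalued map sends `M` injectively below `a`. -/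
def CARD (m : ℕ) : Prop :=
  ∀ F : M → M → Prop, SigmaDef2 m M F → ∀ a : M,
    (∀ x, ∃ y, y < a ∧ F x y) →
      ∃ x0 x1 y, x0 ≠ x1 ∧ y < a ∧ F x0 y ∧ F x1 y

/-- GPHP(Σ_m): for every `x` there is `y` with no Σ_m-definable injection of
`[0,y)` into `[0,x)`. -/
def GPHP (m : ℕ) : Prop := ∀ x : M, ∃ y : M, ¬ExSigmaInj M m y x

/-- WPHP(Σ_m): for `x > 0` there is no Σ_m-definable injection of `[0,2x)` into `[0,x)`. -/
def WPHP (m : ℕ) : Prop := ∀ x : M, 0 < x → ¬ExSigmaInj M m (x + x) x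

/-- `C` is a Σ_m-definable `k`-coloring of `[y]^e` (acting on codes of
`e`-element subsets of `[0,y)`, independently of the chosen code). -/
def IsColoring (m : ℕ) (e y k : M) (C : M → M → Prop) : Prop :=
  SigmaDef2 m M C ∧
    (∀ d D, CodesTupleIn d e y D → ∃ i, i < k ∧ C d i) ∧
    (∀ d d' D i i', CodesTupleIn d e y D → CodesTupleIn d' e y D → C d i → C d' i' → i = i')

/-- FRT^e_k(Σ_m): every Σ_m-definable `k`-coloring of some `[y]^e` has an
M-finite homogeneous set of cardinality `x`, for every `x`. -/
def FRT (m : ℕ) (e k : M) : Prop :=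
  ∀ x : M, ∃ y : M, ∀ C : M → M → Prop, IsColoring M m e y k C →
    ∃ (c : M) (H : Set M), CodesFinset c H x ∧ (∀ z ∈ H, z < y) ∧
      ∃ i, ∀ d D, CodesFinset d D e → D ⊆ H → C d i

/-- fairFRT^e_k(Σ_m): the homogeneous set is required to be given as the range of a
Σ_m-definable injection from `[0,x)` into `[0,y)`. -/
def FairFRT (m : ℕ) (e k : M) : Prop :=
  ∀ x : M, ∃ y : M, ∀ C : M → M → Prop, IsColoring M m e y k C →
    ∃ H : M → M → Prop, SigmaInjRel M m H x y ∧
      ∃ i, ∀ d D, CodesFinset d D e → (∀ z ∈ D, ∃ u, u < x ∧ H u z) → C d i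

/-- `C` is a Σ_m-definable `k`-coloring of `[0, y)`. -/
def IsColoring1 (m : ℕ) (y k : M) (C : M → M → Prop) : Prop :=
  SigmaDef2 m M C ∧
    (∀ z, z < y → ∃ i, i < k ∧ C z i) ∧
    (∀ z i i', z < y → C z i → C z i' → i = i')

/-- FRT¹_k(Σ_m): every Σ_m-definable `k`-coloring of some `[0,y)` has an M-finite
homogeneous set of cardinality `x`, for every `x`. -/
def FRT1 (m : ℕ) (k : M) : Prop :=
  ∀ x : M, ∃ y : M, ∀ C : M → M → Prop, IsColoring1 M m y k C →
    ∃ (c : M) (H : Set M), CodesFinset c H x ∧ (∀ z ∈ H, z < y) ∧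
      ∃ i, ∀ z ∈ H, C z i

/-- fairFRT¹_k(Σ_m). -/
def FairFRT1 (m : ℕ) (k : M) : Prop :=
  ∀ x : M, ∃ y : M, ∀ C : M → M → Prop, IsColoring1 M m y k C →
    ∃ H : M → M → Prop, SigmaInjRel M m H x y ∧
      ∃ i, ∀ u v, u < x → H u v → C v i

end Principles

section Approx

variable {M : Type} [lang.Structure M]

/-- `f` is (the graph of) a partial function. -/
def IsPartialFun (f : M → M → Prop) : Prop := ∀ x y y', f x y → f x y' → y = y'

/-- `s` codes an approximation to the partial function `f` of length `b`. -/
def IsApprox (f : M → M → Prop) (s b : M) : Prop :=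
  (∀ i, i < b → ∃ v, SeqAt s i v) ∧
    (∀ i u v x y, i + 1 < b → SeqAt s i u → SeqAt s (i + 1) v → x ≤ u → f x y → y ≤ v)

/-- `s` codes a `g`-stretched approximation to the partial function `f` of length `b`. -/
def IsStretchedApprox (f g : M → M → Prop) (s b : M) : Prop :=
  (∀ i, i < b → ∃ v, SeqAt s i v) ∧
    (∀ i u w v x y, i + 1 < b → SeqAt s i u → g u w → SeqAt s (i + 1) v →
      x ≤ w → f x y → y ≤ v)

/-- The eventual (limit) value of `fun s => h s ·` is `x`. -/
def EvLim (h : M → M → Prop) (x : M) : Prop := ∃ s : M, ∀ t, s < t → h t x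

end Approx

/-- PΣ_m: every partial Σ_m-definable function admits approximations of every length. -/
def PSig (m : ℕ) (M : Type) [lang.Structure M] : Prop :=
  ∀ f : M → M → Prop, SigmaDef2 m M f → IsPartialFun f → ∀ b : M, ∃ s, IsApprox f s b

section Extensions

variable (M N : Type) [lang.Structure M] [lang.Structure N]

/-- `g : M → N` is Σ_m-elementary: Σ_m formulas with parameters from `M` transfer. -/
def SigmaElem (m : ℕ) (g : M → N) : Prop :=
  ∀ (p : ℕ) (φ : lang.BoundedFormula (Fin p) 0), SigmaFm m 0 φ →
    ∀ v : Fin p → M, (φ.Realize v finZeroElim ↔ φ.Realize (g ∘ v) finZeroElim)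

/-- The extension `g : M → N` is cofinal. -/
def Cofinal (g : M → N) : Prop := ∀ z : N, ∃ x : M, z ≤ g x

/-- `[0,a]^M = [0,a]^N`: every element of `N` below `g a` comes from `M`. -/
def SameBelow (g : M → N) (a : M) : Prop := ∀ z : N, z ≤ g a → ∃ x : M, g x = z

end Extensions

section Ramsey

variable {M : Type} [lang.Structure M]

/-- `f` is an M-coded `k`-coloring of `[y]^e` (assigning colors to codes of
`e`-subsets of `[0,y)`, independently of the code). -/
def CodedColoring (f e y k : M) : Prop :=
  (∀ d D, CodesTupleIn d e y D → ∃ i, i < k ∧ SeqAt f d i) ∧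
    (∀ d d' D i i', CodesTupleIn d e y D → CodesTupleIn d' e y D →
      SeqAt f d i → SeqAt f d' i' → i = i')

/-- The coded coloring `f` of `[y]^e` has an M-coded homogeneous set of cardinality `x`. -/
def CodedHomog (f e y x : M) : Prop :=
  ∃ (c : M) (H : Set M), CodesFinset c H x ∧ (∀ z ∈ H, z < y) ∧
    ∃ i, ∀ d D, CodesFinset d D e → D ⊆ H → SeqAt f d i

/-- `y = r(x, e, k)`: `y` is the least size guaranteeing coded homogeneous sets of
cardinality `x` for all coded `k`-colorings of `e`-subsets. -/
def IsRamsey (x e k y : M) : Prop :=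
  (∀ f, CodedColoring f e y k → CodedHomog f e y x) ∧
    (∀ y', y' < y → ∃ f, CodedColoring f e y' k ∧ ¬CodedHomog f e y' x)

/-- `y = r^(b)(x, e, k)`: the `b`-th iterate of the Ramsey function inside `M`. -/
def IterRamsey (x e k b y : M) : Prop :=
  ∃ s : M, SeqAt s 0 x ∧ SeqAt s b y ∧ (∀ i, i ≤ b → ∃ u, SeqAt s i u) ∧
    (∀ i u v, i < b → SeqAt s i u → SeqAt s (i + 1) v → IsRamsey u e k v)

end Ramsey

end ArithFC

namespace ArithFC

/-- For every `m ≥ 1`, PA⁻ + IΣ₁ proves `fairFRT¹(Σm) → GPHP(Σm)`. -/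
theorem statement_4 (m : ℕ) (hm : 1 ≤ m) (M : Type) [lang.Structure M]
    (hPA : PAm M) (hI : ISig 1 M) :
    (∀ k : M, (1 : M) ≤ k → FairFRT1 M m k) → GPHP M m := by
  intro hF a
  have h01 : (0 : M) < 1 := hPA.zero_lt_one
  rcases hPA.zero_le a with ha | ha
  · obtain ⟨y, hy⟩ := hF a (hPA.discrete a ha) (1 + 1)
    refine ⟨y, ?_⟩
    rintro ⟨F, hF1, hF2, hF3, hF4⟩
    obtain ⟨H, ⟨_, hH2, _, hH4⟩, i, hi⟩ := hy F ⟨hF1, hF2, hF3⟩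
    have h12 : (1 : M) < 1 + 1 := by
      have h := hPA.add_lt_add 0 1 1 h01
      rwa [hPA.add_comm 0 1, hPA.add_zero] at h
    have h02 : (0 : M) < 1 + 1 := hPA.lt_trans _ _ _ h01 h12
    obtain ⟨v, hv, hHv⟩ := hH2 0 h02
    obtain ⟨v', hv', hHv'⟩ := hH2 1 h12
    have e : v = v' := hF4 v v' i hv hv' (hi 0 v h02 hHv) (hi 1 v' h12 hHv')
    subst e
    have e2 : (0 : M) = 1 := hH4 0 1 v h02 h12 hHv hHv'
    rw [← e2] at h01
    exact hPA.lt_irrefl _ h01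
  · subst ha
    refine ⟨1, ?_⟩
    rintro ⟨F, _, hF2, _, _⟩
    obtain ⟨v, hv, _⟩ := hF2 0 h01
    rcases hPA.zero_le v with h | h
    · exact hPA.lt_irrefl _ (hPA.lt_trans _ _ _ hv h)
    · rw [← h] at hv
      exact hPA.lt_irrefl _ hv


end ArithFC
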